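/- Let Q_o = L_fcc ∩ B̄((1/√2)·(1,0,0), 1/√2) and let U = conv(Q_o) be its convex hull, a regular octahedron with side length 1. There exists a constant C > 0 such that for all η, η' ∈ U with η ≠ η' there exist r ∈ (0, C·|η − η'|] and t ∈ ℝ³ with {η, η'} ⊆ r·U + t ⊆ U. -/

import Mathlib

/-!
Write `s = 1/√2`. The octahedron `U` is the `ℓ¹`-ball of radius `s` about `(s, 0, 0)`
(`mem_Uoct_iff`): its lattice points `s · (p, q, k)` satisfy `(p - 1)² + q² + k² ≤ 1` with integer
coordinates, where `|n| ≤ n²`, and conversely a point of the `ℓ¹`-ball is a convex combination of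
the centre and three vertices.

Let `x`, `y` lie in the `ℓ¹`-ball of radius `s` about the origin, and let `m` be the coordinatewise
meet of `x` and `y` towards `0` (the coordinate of smaller absolute value if the signs agree, and
`0` otherwise). Then `‖x - m‖₁ = ‖x‖₁ - ‖m‖₁ ≤ s - ‖m‖₁` and `‖x - m‖₁ ≤ ‖x - y‖₁`, and the same
holds for `y`. So the `ℓ¹`-ball about `m` of radius `min ‖x - y‖₁ (s - ‖m‖₁)` contains both points
and lies in the big ball; its radius is positive, since `‖m‖₁ = s` would force `x = m = y`. As
`‖x - y‖₁ ≤ 3 ‖x - y‖₂`, the ratio of the radii is at most `3√2 ‖x - y‖₂`.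
-/

open scoped BigOperators
open scoped Classical

noncomputable section

abbrev E3 := EuclideanSpace ℝ (Fin 3)

/-- Interpret a plain vector in `Fin 3 → ℝ` as a point of Euclidean 3-space. -/
def toE3 (v : Fin 3 → ℝ) : E3 := (WithLp.equiv 2 (Fin 3 → ℝ)).symm v

/-- The basis vectors `b₁ = (0,1,1)/√2`, `b₂ = (1,0,1)/√2`, `b₃ = (1,1,0)/√2` of the
face-centered cubic lattice. -/
def fccB : Fin 3 → E3 := fun i =>
  (Real.sqrt 2)⁻¹ • toE3 (![![(0:ℝ),1,1], ![1,0,1], ![1,1,0]] i)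

/-- The face-centered cubic lattice `L_fcc`. -/
def Lfcc : Set E3 := {x | ∃ a : Fin 3 → ℤ, x = ∑ i, (a i : ℝ) • fccB i}

/-- The octahedron `Q_o = L_fcc ∩ B̄((1/√2)·(1,0,0), 1/√2)`. -/
def Qoct : Set E3 := Lfcc ∩ Metric.closedBall ((Real.sqrt 2)⁻¹ • toE3 ![1, 0, 0]) (Real.sqrt 2)⁻¹

/-- The solid regular octahedron `U = conv(Q_o)` with side length 1. -/
def Uoct : Set E3 := convexHull ℝ Qoct

/-- The half-diagonal `1/√2` of the octahedron. -/
def halfDiag : ℝ := (Real.sqrt 2)⁻¹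

lemma halfDiag_pos : 0 < halfDiag := by unfold halfDiag; positivity

/-- The `ℓ¹` norm on `ℝ³`. -/
def norm1 (v : E3) : ℝ := |v 0| + |v 1| + |v 2|

/-- The centre `(1/√2, 0, 0)` of the octahedron. -/
def octCenter : E3 := halfDiag • toE3 ![1, 0, 0]

@[simp] lemma toE3_apply (v : Fin 3 → ℝ) (i : Fin 3) : toE3 v i = v i := rfl

lemma norm1_smul (r : ℝ) (v : E3) : norm1 (r • v) = |r| * norm1 v := by
  simp only [norm1, PiLp.smul_apply, smul_eq_mul, abs_mul]; ring

lemma norm1_add_le (u v : E3) : norm1 (u + v) ≤ norm1 u + norm1 v := by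
  simp only [norm1, PiLp.add_apply]
  linarith [abs_add_le (u 0) (v 0), abs_add_le (u 1) (v 1), abs_add_le (u 2) (v 2)]

lemma norm1_le (v : E3) : norm1 v ≤ 3 * ‖v‖ := by
  have h : ∀ i, |v i| ≤ ‖v‖ := fun i => PiLp.norm_apply_le v i
  unfold norm1
  linarith [h 0, h 1, h 2]

lemma norm1_nonneg (v : E3) : 0 ≤ norm1 v := by unfold norm1; positivity

lemma eq_of_norm1_sub_nonpos {u v : E3} (h : norm1 (u - v) ≤ 0) : u = v := by
  simp only [norm1, PiLp.sub_apply] at h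
  have h0 := abs_nonneg (u 0 - v 0)
  have h1 := abs_nonneg (u 1 - v 1)
  have h2 := abs_nonneg (u 2 - v 2)
  ext i
  fin_cases i
  · exact sub_eq_zero.1 (abs_eq_zero.1 (le_antisymm (by dsimp; linarith) h0))
  · exact sub_eq_zero.1 (abs_eq_zero.1 (le_antisymm (by dsimp; linarith) h1))
  · exact sub_eq_zero.1 (abs_eq_zero.1 (le_antisymm (by dsimp; linarith) h2))

lemma convex_octBall : Convex ℝ {x : E3 | norm1 (x - octCenter) ≤ halfDiag} := by
  intro x hx y hy a b ha hb hab
  simp only [Set.mem_ofPred_eq] at *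
  have e : a • x + b • y - octCenter = a • (x - octCenter) + b • (y - octCenter) := by
    have : octCenter = (a + b) • octCenter := by rw [hab, one_smul]
    nth_rewrite 1 [this]
    module
  rw [e]
  refine (norm1_add_le _ _).trans ?_
  rw [norm1_smul, norm1_smul, abs_of_nonneg ha, abs_of_nonneg hb]
  calc _ ≤ a * halfDiag + b * halfDiag := by gcongr
    _ = halfDiag := by rw [← add_mul, hab, one_mul]

lemma Lfcc_coord {x : E3} {a : Fin 3 → ℤ} (h : x = ∑ i, (a i : ℝ) • fccB i) :
    x 0 = halfDiag * (a 1 + a 2) ∧ x 1 = halfDiag * (a 0 + a 2) ∧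
      x 2 = halfDiag * (a 0 + a 1) := by
  subst h
  simp [Fin.sum_univ_three, fccB, halfDiag]
  refine ⟨?_, ?_, ?_⟩ <;> ring

lemma abs_le_sq_int (n : ℤ) : |(n : ℝ)| ≤ (n : ℝ) ^ 2 := by
  have h : |n| ≤ n ^ 2 := by
    rw [← sq_abs]
    rcases (abs_nonneg n).eq_or_lt with h | h
    · rw [← h]; simp
    · nlinarith
  exact_mod_cast h

lemma Qoct_subset : Qoct ⊆ {x : E3 | norm1 (x - octCenter) ≤ halfDiag} := by
  rintro x ⟨⟨a, ha⟩, hb⟩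
  obtain ⟨h0, h1, h2⟩ := Lfcc_coord ha
  change dist x octCenter ≤ halfDiag at hb
  have hs := halfDiag_pos
  rw [EuclideanSpace.dist_eq, Real.sqrt_le_left hs.le] at hb
  simp only [Fin.sum_univ_three, Real.dist_eq, sq_abs] at hb
  have e0 : x 0 - octCenter 0 = halfDiag * ((a 1 + a 2 - 1 : ℤ) : ℝ) := by
    rw [h0]; simp [octCenter]; ring
  have e1 : x 1 - octCenter 1 = halfDiag * ((a 0 + a 2 : ℤ) : ℝ) := by
    rw [h1]; simp [octCenter]
  have e2 : x 2 - octCenter 2 = halfDiag * ((a 0 + a 1 : ℤ) : ℝ) := by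
    rw [h2]; simp [octCenter]
  rw [e0, e1, e2] at hb
  simp only [Set.mem_ofPred_eq, norm1, PiLp.sub_apply]
  rw [e0, e1, e2]
  simp only [abs_mul, abs_of_pos hs]
  have k0 := abs_le_sq_int (a 1 + a 2 - 1)
  have k1 := abs_le_sq_int (a 0 + a 2)
  have k2 := abs_le_sq_int (a 0 + a 1)
  generalize ((a 1 + a 2 - 1 : ℤ) : ℝ) = p at *
  generalize ((a 0 + a 2 : ℤ) : ℝ) = q at *
  generalize ((a 0 + a 1 : ℤ) : ℝ) = k at *
  have hle : p ^ 2 + q ^ 2 + k ^ 2 ≤ 1 := by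
    refine le_of_mul_le_mul_left (a := halfDiag ^ 2) ?_ (by positivity)
    linarith
  calc _ = halfDiag * (|p| + |q| + |k|) := by ring
    _ ≤ halfDiag * 1 := by gcongr; linarith
    _ = halfDiag := mul_one _

lemma mem_Qoct (x : E3) (a : Fin 3 → ℤ) (hx : x = ∑ i, (a i : ℝ) • fccB i)
    (h : (a 1 + a 2 - 1) ^ 2 + (a 0 + a 2) ^ 2 + (a 0 + a 1) ^ 2 ≤ 1) : x ∈ Qoct := by
  refine ⟨⟨a, hx⟩, ?_⟩
  obtain ⟨h0, h1, h2⟩ := Lfcc_coord hx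
  change dist x octCenter ≤ halfDiag
  have hs := halfDiag_pos
  rw [EuclideanSpace.dist_eq, Real.sqrt_le_left hs.le]
  simp only [Fin.sum_univ_three, Real.dist_eq, sq_abs, h0, h1, h2]
  have h' : ((a 1 + a 2 - 1) ^ 2 + (a 0 + a 2) ^ 2 + (a 0 + a 1) ^ 2 : ℝ) ≤ 1 := by
    exact_mod_cast h
  simp [octCenter]
  nlinarith [mul_le_mul_of_nonneg_left h' (sq_nonneg halfDiag)]

/-- The vertices of the octahedron in each coordinate direction lie in `Qoct`. -/
lemma vertex_mem (i : Fin 3) (e : ℝ) (he : e = 1 ∨ e = -1) :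
    octCenter + (e * halfDiag) • EuclideanSpace.single i (1 : ℝ) ∈ Qoct := by
  have key : ∀ a : Fin 3 → ℤ, ∀ j : Fin 3, (∑ i, (a i : ℝ) • fccB i : E3) j =
      halfDiag * ![(a 1 + a 2 : ℝ), a 0 + a 2, a 0 + a 1] j := by
    intro a j
    obtain ⟨h0, h1, h2⟩ := Lfcc_coord (a := a) rfl
    fin_cases j
    · exact h0
    · exact h1
    · exact h2
  have hgo : ∀ a : Fin 3 → ℤ,
      (∀ j, (octCenter + (e * halfDiag) • EuclideanSpace.single i (1 : ℝ) : E3) j =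
        halfDiag * ![(a 1 + a 2 : ℝ), a 0 + a 2, a 0 + a 1] j) →
      (a 1 + a 2 - 1) ^ 2 + (a 0 + a 2) ^ 2 + (a 0 + a 1) ^ 2 ≤ 1 →
      octCenter + (e * halfDiag) • EuclideanSpace.single i (1 : ℝ) ∈ Qoct := by
    intro a h1 h2
    refine mem_Qoct _ a ?_ h2
    ext j
    rw [h1, key]
  -- In units of `1/√2`, the vertices are `(2,0,0)`, `0`, `(1,±1,0)` and `(1,0,±1)`.
  fin_cases i <;> rcases he with rfl | rfl
  · refine hgo ![-1, 1, 1] ?_ (by simp)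
    intro j; fin_cases j <;> simp [octCenter] <;> ring
  · refine hgo ![0, 0, 0] ?_ (by simp)
    intro j; fin_cases j <;> simp [octCenter]
  · refine hgo ![0, 0, 1] ?_ (by simp)
    intro j; fin_cases j <;> simp [octCenter]
  · refine hgo ![-1, 1, 0] ?_ (by simp)
    intro j; fin_cases j <;> simp [octCenter]
  · refine hgo ![0, 1, 0] ?_ (by simp)
    intro j; fin_cases j <;> simp [octCenter]
  · refine hgo ![-1, 0, 1] ?_ (by simp)
    intro j; fin_cases j <;> simp [octCenter]

lemma octCenter_mem : octCenter ∈ Uoct := by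
  have h1 := subset_convexHull ℝ _ (vertex_mem 0 1 (Or.inl rfl))
  have h2 := subset_convexHull ℝ _ (vertex_mem 0 (-1) (Or.inr rfl))
  have h := (convex_convexHull ℝ Qoct) h1 h2 (a := 1 / 2) (b := 1 / 2)
    (by norm_num) (by norm_num) (by norm_num)
  have e : (octCenter : E3) =
      (1 / 2 : ℝ) • (octCenter + (1 * halfDiag) • EuclideanSpace.single 0 (1 : ℝ)) +
      (1 / 2 : ℝ) • (octCenter + (-1 * halfDiag) • EuclideanSpace.single 0 (1 : ℝ)) := by
    module
  rw [e]
  exact h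

lemma exists_sign (a : ℝ) : ∃ e : ℝ, (e = 1 ∨ e = -1) ∧ |a| * e = a := by
  rcases abs_choice a with h | h
  · exact ⟨1, Or.inl rfl, by rw [h, mul_one]⟩
  · exact ⟨-1, Or.inr rfl, by rw [h]; ring⟩

/-- The octahedron is the closed `ℓ¹`-ball of radius `1/√2` about its centre. -/
lemma mem_Uoct_iff (x : E3) : x ∈ Uoct ↔ norm1 (x - octCenter) ≤ halfDiag := by
  constructor
  · exact fun h => convexHull_min Qoct_subset convex_octBall h
  · intro h
    have hs := halfDiag_pos
    obtain ⟨v, rfl⟩ : ∃ v, x = octCenter + v := ⟨x - octCenter, by abel⟩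
    rw [add_sub_cancel_left] at h
    choose e he hv using fun i => exists_sign (v i)
    -- Weight `|vᵢ|/s` on the vertex in the direction of `vᵢ`, and the rest on the centre.
    have hmem := (convex_convexHull ℝ Qoct).sum_mem (t := Finset.univ)
      (w := ![1 - norm1 v / halfDiag, |v 0| / halfDiag, |v 1| / halfDiag, |v 2| / halfDiag])
      (z := ![octCenter, octCenter + (e 0 * halfDiag) • EuclideanSpace.single 0 (1 : ℝ),
        octCenter + (e 1 * halfDiag) • EuclideanSpace.single 1 (1 : ℝ),
        octCenter + (e 2 * halfDiag) • EuclideanSpace.single 2 (1 : ℝ)])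
      (by
        have : norm1 v / halfDiag ≤ 1 := (div_le_one hs).2 h
        intro i _
        fin_cases i
        · simpa using this
        all_goals
          simp
          positivity)
      (by
        simp [Fin.sum_univ_four, norm1]
        ring)
      (by
        intro i _
        fin_cases i
        · exact octCenter_mem
        · exact subset_convexHull ℝ _ (vertex_mem 0 _ (he 0))
        · exact subset_convexHull ℝ _ (vertex_mem 1 _ (he 1))
        · exact subset_convexHull ℝ _ (vertex_mem 2 _ (he 2)))
    refine Set.mem_of_eq_of_mem ?_ hmem
    have hc : ∀ i, |v i| / halfDiag * (e i * halfDiag) = v i := by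
      intro i
      rw [← mul_assoc, mul_right_comm, div_mul_cancel₀ _ hs.ne', hv]
    have hsum : v = (v 0) • EuclideanSpace.single 0 (1 : ℝ) +
        (v 1) • EuclideanSpace.single 1 (1 : ℝ) + (v 2) • EuclideanSpace.single 2 (1 : ℝ) := by
      ext j; fin_cases j <;> simp
    simp only [Fin.sum_univ_four, Matrix.cons_val, smul_add, smul_smul, hc]
    nth_rewrite 1 [hsum]
    unfold norm1
    module

/-- The meet `m` of `a` and `b` towards `0`: it lies between `0` and each of them, so that absolute
values subtract, and it also lies between `a` and `b`. -/
lemma exists_meet (a b : ℝ) : ∃ m : ℝ, |a - m| = |a| - |m| ∧ |b - m| = |b| - |m| ∧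
    |a - m| ≤ |a - b| ∧ |b - m| ≤ |a - b| := by
  have h : ∀ a b : ℝ, 0 ≤ a → ∃ m : ℝ, |a - m| = |a| - |m| ∧ |b - m| = |b| - |m| ∧
      |a - m| ≤ |a - b| ∧ |b - m| ≤ |a - b| := by
    intro a b ha
    rcases le_total a b with hab | hab
    · exact ⟨a, by grind⟩
    · rcases le_total 0 b with hb | hb
      · exact ⟨b, by grind⟩
      · exact ⟨0, by grind⟩
  rcases le_total 0 a with ha | ha
  · exact h a b ha
  · obtain ⟨m, hm⟩ := h (-a) (-b) (by linarith)
    exact ⟨-m, by grind⟩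

/-- Any two distinct points of the octahedron `U` are contained in a scaled-and-translated
copy `r·U + t ⊆ U` with `r ≤ C·|η − η'|`. -/
theorem octahedron_nesting :
    ∃ C > (0:ℝ), ∀ η ∈ Uoct, ∀ η' ∈ Uoct, η ≠ η' →
      ∃ (r : ℝ) (t : E3), 0 < r ∧ r ≤ C * ‖η - η'‖ ∧
        ({η, η'} : Set E3) ⊆ (fun u => r • u + t) '' Uoct ∧
        (fun u => r • u + t) '' Uoct ⊆ Uoct := by
  have hs := halfDiag_pos
  refine ⟨3 / halfDiag, by positivity, ?_⟩
  intro η hη η' hη' hne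
  rw [mem_Uoct_iff] at hη hη'
  obtain ⟨x, rfl⟩ : ∃ v, η = octCenter + v := ⟨η - octCenter, by abel⟩
  obtain ⟨y, rfl⟩ : ∃ v, η' = octCenter + v := ⟨η' - octCenter, by abel⟩
  rw [add_sub_cancel_left] at hη hη'
  rw [add_sub_add_left_eq_sub]
  have hxy : x ≠ y := fun h => hne (by rw [h])
  choose m0 hm using fun i => exists_meet (x i) (y i)
  set m : E3 := toE3 m0 with hmdef
  have hx1 : norm1 (x - m) = norm1 x - norm1 m := by
    simp only [norm1, hmdef, PiLp.sub_apply, toE3_apply, (hm _).1]; ring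
  have hy1 : norm1 (y - m) = norm1 y - norm1 m := by
    simp only [norm1, hmdef, PiLp.sub_apply, toE3_apply, (hm _).2.1]; ring
  have hx2 : norm1 (x - m) ≤ norm1 (x - y) := by
    simp only [norm1, hmdef, PiLp.sub_apply, toE3_apply]
    linarith [(hm 0).2.2.1, (hm 1).2.2.1, (hm 2).2.2.1]
  have hy2 : norm1 (y - m) ≤ norm1 (x - y) := by
    simp only [norm1, hmdef, PiLp.sub_apply, toE3_apply]
    linarith [(hm 0).2.2.2, (hm 1).2.2.2, (hm 2).2.2.2]
  have hmlt : norm1 m < halfDiag := by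
    by_contra! hge
    exact hxy ((eq_of_norm1_sub_nonpos (u := x) (v := m) (by linarith)).trans
      (eq_of_norm1_sub_nonpos (u := y) (v := m) (by linarith)).symm)
  have hd : 0 < norm1 (x - y) := by
    by_contra! hle
    exact hxy (eq_of_norm1_sub_nonpos hle)
  obtain ⟨ρ, hρ⟩ : ∃ ρ, ρ = min (norm1 (x - y)) (halfDiag - norm1 m) := ⟨_, rfl⟩
  have hρ0 : 0 < ρ := by rw [hρ]; exact lt_min hd (by linarith)
  have hρ1 : ρ ≤ norm1 (x - y) := by rw [hρ]; exact min_le_left _ _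
  have hρ2 : ρ ≤ halfDiag - norm1 m := by rw [hρ]; exact min_le_right _ _
  have hxρ : norm1 (x - m) ≤ ρ := by rw [hρ]; exact le_min hx2 (by linarith)
  have hyρ : norm1 (y - m) ≤ ρ := by rw [hρ]; exact le_min hy2 (by linarith)
  have hr : 0 < ρ / halfDiag := by positivity
  -- `t` is chosen so that the homothety sends the centre of `U` to `octCenter + m`.
  refine ⟨ρ / halfDiag, octCenter + m - (ρ / halfDiag) • octCenter, hr, ?_, ?_, ?_⟩
  · rw [div_mul_eq_mul_div]
    gcongr
    exact hρ1.trans (norm1_le _)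
  · have hin : ∀ z : E3, norm1 (z - m) ≤ ρ → octCenter + z ∈
        (fun u => (ρ / halfDiag) • u + (octCenter + m - (ρ / halfDiag) • octCenter)) '' Uoct := by
      intro z hz
      refine ⟨octCenter + (ρ / halfDiag)⁻¹ • (z - m), ?_, ?_⟩
      · rw [mem_Uoct_iff, add_sub_cancel_left, norm1_smul, abs_of_pos (inv_pos.2 hr),
          inv_mul_le_iff₀ hr, div_mul_cancel₀ _ hs.ne']
        exact hz
      · simp only [smul_add, smul_inv_smul₀ hr.ne']
        abel
    rintro z (rfl | rfl)
    · exact hin x hxρ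
    · exact hin y hyρ
  · rintro _ ⟨u, hu, rfl⟩
    rw [mem_Uoct_iff] at hu ⊢
    have e : (ρ / halfDiag) • u + (octCenter + m - (ρ / halfDiag) • octCenter) - octCenter =
        (ρ / halfDiag) • (u - octCenter) + m := by module
    dsimp only
    rw [e]
    refine (norm1_add_le _ _).trans ?_
    rw [norm1_smul, abs_of_pos hr]
    have : ρ / halfDiag * norm1 (u - octCenter) ≤ ρ := by
      calc _ ≤ ρ / halfDiag * halfDiag := by gcongr
        _ = ρ := div_mul_cancel₀ _ hs.ne'
    linarith

end
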